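/- There is a constant c (independent of the game) such that every coordination game with arbitrary bonuses on a simple cycle on n nodes in which at most two edges have weight different from 1 (all other edges have weight 1) admits, from every joint strategy, a finite improvement path of length at most c·n (hence ending in a Nash equilibrium). -/

import Mathlib

/-!
Let the nodes move in cyclic order. A node whose colour is not a best response switches to a fixed
colour of maximal bonus if that is a best response, and otherwise copies its predecessor. After one
round only the node about to move can be dissatisfied, so unless an equilibrium is reached every
move is a switch. Since bonuses are integers, a node whose incoming edge has weight at most `1`
switches only to colours of maximal bonus; and a node holding such a colour can only switch by
copying. Hence, after three rounds, the moves that do not copy are made by the at most two nodes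
with a heavier incoming edge. In every round some move does not copy, for otherwise the whole cycle
would be monochromatic and satisfied. Three such moves alternate between the two heavy nodes, so one
of them makes two in successive rounds; but the first gave it a colour of maximal bonus, so the
second must have been a copy.
-/


open scoped Classical

namespace CG

/-- Payoff of node `i` in a coordination game on a weighted directed graph
with adjacency `adj` (an edge `j → i` is `adj j i`), edge weights `w`,
bonuses `β`, under the joint strategy `s`. -/
noncomputable def payoff {V M : Type} [Fintype V] (adj : V → V → Prop)
    (w : V → V → ℝ) (β : V → M → ℕ) (s : V → M) (i : V) : ℝ :=
  (∑ j ∈ Finset.univ.filter (fun j => adj j i ∧ s j = s i), w j i) + (β i (s i) : ℝ)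

/-- A joint strategy assigns to every node a colour from its colour set. -/
def Valid {V M : Type} (C : V → Finset M) (s : V → M) : Prop :=
  ∀ i, s i ∈ C i

/-- `s'` is a profitable deviation of the (non-empty) coalition
`K = {i | s i ≠ s' i}` from `s`. -/
def ProfDev {V M : Type} [Fintype V] (adj : V → V → Prop) (w : V → V → ℝ)
    (β : V → M → ℕ) (C : V → Finset M) (s s' : V → M) : Prop :=
  Valid C s' ∧ s ≠ s' ∧
    ∀ i, s i ≠ s' i → payoff adj w β s i < payoff adj w β s' i

/-- A profitable deviation of a single player. -/
def UniDev {V M : Type} [Fintype V] (adj : V → V → Prop) (w : V → V → ℝ)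
    (β : V → M → ℕ) (C : V → Finset M) (s s' : V → M) : Prop :=
  ProfDev adj w β C s s' ∧ ∃ i, ∀ j, j ≠ i → s j = s' j

/-- A Nash equilibrium: no single player has a profitable deviation. -/
def IsNash {V M : Type} [Fintype V] (adj : V → V → Prop) (w : V → V → ℝ)
    (β : V → M → ℕ) (C : V → Finset M) (s : V → M) : Prop :=
  Valid C s ∧ ∀ s', ¬ UniDev adj w β C s s'

/-- A strong equilibrium: no coalition has a profitable deviation. -/
def IsStrong {V M : Type} [Fintype V] (adj : V → V → Prop) (w : V → V → ℝ)
    (β : V → M → ℕ) (C : V → Finset M) (s : V → M) : Prop :=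
  Valid C s ∧ ∀ s', ¬ ProfDev adj w β C s s'

/-- There is a finite improvement path of length `L` starting at `s`
(each step a profitable single-player deviation) ending in a Nash equilibrium. -/
def ImpPath {V M : Type} [Fintype V] (adj : V → V → Prop) (w : V → V → ℝ)
    (β : V → M → ℕ) (C : V → Finset M) (s : V → M) (L : ℕ) : Prop :=
  ∃ σ : ℕ → V → M, σ 0 = s ∧
    (∀ t, t < L → UniDev adj w β C (σ t) (σ (t + 1))) ∧
    IsNash adj w β C (σ L)

/-- There is a finite c-improvement path of length `L` starting at `s`
(each step a profitable coalition deviation) ending in a strong equilibrium. -/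
def CImpPath {V M : Type} [Fintype V] (adj : V → V → Prop) (w : V → V → ℝ)
    (β : V → M → ℕ) (C : V → Finset M) (s : V → M) (L : ℕ) : Prop :=
  ∃ σ : ℕ → V → M, σ 0 = s ∧
    (∀ t, t < L → ProfDev adj w β C (σ t) (σ (t + 1))) ∧
    IsStrong adj w β C (σ L)

/-- Adjacency of the simple cycle `1 → 2 → ⋯ → n → 1` on `Fin n`. -/
def cycAdj (n : ℕ) : Fin n → Fin n → Prop :=
  fun i j => (i.val + 1) % n = j.val

/-- The decision problem of a node with a single predecessor: the weight of its incoming edge, its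
bonuses and its available colours. -/
structure LocalGame (M : Type*) where
  weight : ℝ
  weight_nonneg : 0 ≤ weight
  bonus : M → ℕ
  colours : Finset M
  colours_nonempty : colours.Nonempty

namespace LocalGame

variable {M : Type*} (G : LocalGame M)

/-- Payoff of the node when its predecessor plays `y` and it plays `z` itself. -/
noncomputable def payoff (y z : M) : ℝ :=
  (if y = z then G.weight else 0) + G.bonus z

/-- `z` is a best response of the node to the colour `y` of its predecessor. -/
def IsBestResponse (y z : M) : Prop :=
  z ∈ G.colours ∧ ∀ x ∈ G.colours, G.payoff y x ≤ G.payoff y z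

/-- `z` has maximal bonus among the available colours. -/
def IsTopBonus (z : M) : Prop :=
  z ∈ G.colours ∧ ∀ x ∈ G.colours, G.bonus x ≤ G.bonus z

theorem exists_isTopBonus : ∃ z, G.IsTopBonus z :=
  G.colours.exists_max_image G.bonus G.colours_nonempty

/-- A fixed colour of maximal bonus. -/
noncomputable def topColour : M :=
  G.exists_isTopBonus.choose

/-- The colour to which a node playing `z` moves when its predecessor plays `y`: it stays if `z` is
a best response, and copies its predecessor only if `topColour` is not a best response. -/
noncomputable def reply (y z : M) : M :=
  if G.IsBestResponse y z then z
  else if G.IsBestResponse y G.topColour then G.topColour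
  else y

variable {G} {x y z : M}

theorem isTopBonus_topColour : G.IsTopBonus G.topColour :=
  G.exists_isTopBonus.choose_spec

theorem payoff_self : G.payoff z z = G.weight + G.bonus z := by
  simp only [payoff, if_true]

theorem payoff_of_ne (h : y ≠ z) : G.payoff y z = G.bonus z := by
  simp only [payoff, if_neg h, zero_add]

theorem bonus_le_payoff : (G.bonus z : ℝ) ≤ G.payoff y z := by
  obtain rfl | hyz := eq_or_ne y z
  · linarith [payoff_self (G := G) (z := y), G.weight_nonneg]
  · exact (payoff_of_ne hyz).ge

theorem payoff_le_payoff_self : G.payoff y z ≤ G.payoff z z := by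
  obtain rfl | hyz := eq_or_ne y z
  · exact le_rfl
  · rw [payoff_of_ne hyz]
    exact bonus_le_payoff

theorem IsBestResponse.self (h : G.IsBestResponse y z) : G.IsBestResponse z z := by
  refine ⟨h.1, fun x hx => ?_⟩
  obtain rfl | hzx := eq_or_ne z x
  · exact le_rfl
  · calc G.payoff z x = G.bonus x := payoff_of_ne hzx
      _ ≤ G.payoff y x := bonus_le_payoff
      _ ≤ G.payoff y z := h.2 x hx
      _ ≤ G.payoff z z := payoff_le_payoff_self

theorem IsBestResponse.of_payoff_le (hx : G.IsBestResponse y x) (hz : z ∈ G.colours)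
    (h : G.payoff y x ≤ G.payoff y z) : G.IsBestResponse y z :=
  ⟨hz, fun u hu => (hx.2 u hu).trans h⟩

theorem IsTopBonus.bonus_le_payoff (hz : G.IsTopBonus z) (hx : x ∈ G.colours) :
    (G.bonus x : ℝ) ≤ G.payoff y z :=
  (Nat.cast_le.2 (hz.2 x hx)).trans LocalGame.bonus_le_payoff

theorem IsTopBonus.mem_and_bonus_lt_of_not_isBestResponse (hz : G.IsTopBonus z)
    (h : ¬ G.IsBestResponse y z) : y ∈ G.colours ∧ (G.bonus z : ℝ) < G.payoff y y := by
  obtain ⟨x, hx, hlt⟩ : ∃ x ∈ G.colours, G.payoff y z < G.payoff y x := by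
    by_contra! hle
    exact h ⟨hz.1, hle⟩
  obtain rfl : y = x := by
    by_contra hyx
    rw [payoff_of_ne hyx] at hlt
    exact hlt.not_ge (hz.bonus_le_payoff hx)
  exact ⟨hx, LocalGame.bonus_le_payoff.trans_lt hlt⟩

theorem IsTopBonus.isBestResponse_self_of_not (hz : G.IsTopBonus z) (h : ¬ G.IsBestResponse y z) :
    G.IsBestResponse y y := by
  obtain ⟨hy, hlt⟩ := hz.mem_and_bonus_lt_of_not_isBestResponse h
  refine ⟨hy, fun x hx => ?_⟩
  obtain rfl | hyx := eq_or_ne y x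
  · exact le_rfl
  · rw [payoff_of_ne hyx]
    exact (Nat.cast_le.2 (hz.2 x hx)).trans hlt.le

theorem IsTopBonus.of_weight_le_one (hz : G.IsTopBonus z) (h : ¬ G.IsBestResponse y z)
    (hw : G.weight ≤ 1) : G.IsTopBonus y := by
  obtain ⟨hy, hlt⟩ := hz.mem_and_bonus_lt_of_not_isBestResponse h
  have hzy : G.bonus z ≤ G.bonus y := by
    rw [payoff_self] at hlt
    have : (G.bonus z : ℝ) < (1 + G.bonus y : ℕ) := by push_cast; linarith
    have := Nat.cast_lt.1 this
    lia
  exact ⟨hy, fun x hx => (hz.2 x hx).trans hzy⟩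

theorem IsTopBonus.eq_of_isBestResponse (hz : G.IsTopBonus z) (h : ¬ G.IsBestResponse y z)
    (hx : G.IsBestResponse y x) : x = y := by
  by_contra hne
  have hxz : G.payoff y x ≤ G.payoff y z := by
    rw [payoff_of_ne (Ne.symm hne)]
    exact hz.bonus_le_payoff hx.1
  exact h (hx.of_payoff_le hz.1 hxz)

theorem reply_of_isBestResponse (h : G.IsBestResponse y z) : G.reply y z = z :=
  if_pos h

theorem isBestResponse_reply : G.IsBestResponse y (G.reply y z) := by
  unfold reply
  split_ifs with hz htop
  · exact hz
  · exact htop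
  · exact isTopBonus_topColour.isBestResponse_self_of_not htop

theorem isTopBonus_reply_of_ne (h : ¬ G.IsBestResponse y z) (hne : G.reply y z ≠ y) :
    G.IsTopBonus (G.reply y z) := by
  unfold reply at hne ⊢
  rw [if_neg h] at hne ⊢
  split_ifs at hne ⊢
  · exact isTopBonus_topColour
  · exact absurd rfl hne

theorem isTopBonus_reply_of_weight_le_one (h : ¬ G.IsBestResponse y z) (hw : G.weight ≤ 1) :
    G.IsTopBonus (G.reply y z) := by
  unfold reply
  rw [if_neg h]
  split_ifs with htop
  · exact isTopBonus_topColour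
  · exact isTopBonus_topColour.of_weight_le_one htop hw

theorem IsTopBonus.reply_eq (hz : G.IsTopBonus z) (h : ¬ G.IsBestResponse y z) :
    G.reply y z = y :=
  hz.eq_of_isBestResponse h isBestResponse_reply

end LocalGame

section ImprovementPath

variable {V M : Type} [Fintype V] {adj : V → V → Prop} {w : V → V → ℝ} {β : V → M → ℕ}
  {C : V → Finset M}

theorem exists_impPath_le_of_eq_or_uniDev {T : ℕ} {x : ℕ → V → M}
    (hstep : ∀ t, x (t + 1) = x t ∨ UniDev adj w β C (x t) (x (t + 1)))
    (hnash : IsNash adj w β C (x T)) : ∃ L ≤ T, ImpPath adj w β C (x 0) L := by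
  induction T generalizing x with
  | zero => exact ⟨0, le_rfl, x, rfl, fun t ht => absurd ht t.not_lt_zero, hnash⟩
  | succ T ih =>
    obtain ⟨L, hL, σ, hσ0, hσ, hσL⟩ := ih (x := fun t => x (t + 1)) (fun t => hstep (t + 1)) hnash
    obtain heq | hdev := hstep 0
    · exact ⟨L, by lia, σ, hσ0.trans heq, hσ, hσL⟩
    · refine ⟨L + 1, by lia, fun t => Nat.casesOn t (x 0) σ, rfl, fun t ht => ?_, hσL⟩
      cases t with
      | zero =>
        change UniDev adj w β C (x 0) (σ 0)
        rwa [hσ0]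
      | succ t => exact hσ t (by lia)

end ImprovementPath

section UniquePredecessor

variable {V M : Type} {w : V → V → ℝ} {C : V → Finset M} {pred : V → V}

/-- The decision problem of the node `i` in a game in which `pred i` is its only predecessor. -/
def localGame (hw : ∀ i, 0 ≤ w (pred i) i) (β : V → M → ℕ) (hC : ∀ i, (C i).Nonempty) (i : V) :
    LocalGame M where
  weight := w (pred i) i
  weight_nonneg := hw i
  bonus := β i
  colours := C i
  colours_nonempty := hC i

variable [Fintype V] {adj : V → V → Prop} {β : V → M → ℕ} {hw : ∀ i, 0 ≤ w (pred i) i}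
  {hC : ∀ i, (C i).Nonempty} {s : V → M} {i : V}

theorem payoff_eq_localGame_payoff (hadj : ∀ i j, adj j i ↔ j = pred i) :
    payoff adj w β s i = (localGame hw β hC i).payoff (s (pred i)) (s i) := by
  unfold payoff LocalGame.payoff
  congr 1
  rw [Finset.sum_filter, Finset.sum_eq_single (pred i)]
  · simp only [hadj, true_and]
    rfl
  · intro j _ hj
    rw [if_neg fun h => hj ((hadj i j).1 h.1)]
  · exact fun h => absurd (Finset.mem_univ _) h

theorem isNash_of_forall_isBestResponse (hadj : ∀ i j, adj j i ↔ j = pred i)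
    (hpred : ∀ i, pred i ≠ i)
    (hs : ∀ i, (localGame hw β hC i).IsBestResponse (s (pred i)) (s i)) :
    IsNash adj w β C s := by
  refine ⟨fun i => (hs i).1, ?_⟩
  rintro s' ⟨⟨hs', hne, himp⟩, i, hi⟩
  have hsi : s i ≠ s' i := fun heq =>
    hne (funext fun j => (eq_or_ne j i).elim (fun hj => hj ▸ heq) (hi j))
  have hlt := himp i hsi
  rw [payoff_eq_localGame_payoff (hw := hw) (hC := hC) hadj,
    payoff_eq_localGame_payoff (hw := hw) (hC := hC) hadj, ← hi _ (hpred i)] at hlt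
  exact hlt.not_ge ((hs i).2 _ (hs' i))

theorem uniDev_update [DecidableEq V] (hadj : ∀ i j, adj j i ↔ j = pred i) (hpred : pred i ≠ i)
    (hs : Valid C s) {z : M} (hz : (localGame hw β hC i).IsBestResponse (s (pred i)) z)
    (hsi : ¬ (localGame hw β hC i).IsBestResponse (s (pred i)) (s i)) :
    UniDev adj w β C s (Function.update s i z) := by
  have hlt : payoff adj w β s i < payoff adj w β (Function.update s i z) i := by
    rw [payoff_eq_localGame_payoff (hw := hw) (hC := hC) hadj,
      payoff_eq_localGame_payoff (hw := hw) (hC := hC) hadj,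
      Function.update_of_ne hpred, Function.update_self]
    exact lt_of_not_ge fun hle => hsi (hz.of_payoff_le (hs i) hle)
  refine ⟨⟨?_, fun heq => hlt.ne (by rw [← heq]), fun j hj => ?_⟩, i, fun j hj => ?_⟩
  · exact (Function.forall_update_iff s fun j c => c ∈ C j).2 ⟨hz.1, fun j _ => hs j⟩
  · obtain rfl : j = i := by
      by_contra hji
      exact hj (Function.update_of_ne hji z s).symm
    exact hlt
  · exact (Function.update_of_ne hj z s).symm

theorem update_reply_eq_or_uniDev [DecidableEq V] (hadj : ∀ i j, adj j i ↔ j = pred i)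
    (hpred : pred i ≠ i) (hs : Valid C s) :
    Function.update s i ((localGame hw β hC i).reply (s (pred i)) (s i)) = s ∨
      UniDev adj w β C s
        (Function.update s i ((localGame hw β hC i).reply (s (pred i)) (s i))) := by
  by_cases h : (localGame hw β hC i).IsBestResponse (s (pred i)) (s i)
  · left
    rw [LocalGame.reply_of_isBestResponse h, Function.update_eq_self]
  · exact Or.inr (uniDev_update hadj hpred hs LocalGame.isBestResponse_reply h)

end UniquePredecessor

section RoundRobin

open scoped Fin.CommRing

variable {n : ℕ} [NeZero n]

theorem natCast_ne_natCast_of_lt_add {t u : ℕ} (htu : t < u) (hut : u < t + n) :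
    (t : Fin n) ≠ u := by
  rw [Ne, CharP.natCast_eq_natCast (Fin n) n, Nat.modEq_iff_dvd' htu.le]
  exact Nat.not_dvd_of_pos_of_lt (by lia) (by lia)

theorem natCast_add_period (t : ℕ) : ((t + n : ℕ) : Fin n) = t := by
  rw [Nat.cast_add, Fin.natCast_self, add_zero]

theorem exists_natCast_eq_of_lt_add (t : ℕ) (i : Fin n) :
    ∃ u, t ≤ u ∧ u < t + n ∧ (u : Fin n) = i := by
  refine ⟨t + (i - t : Fin n).val, by lia, by have := (i - t : Fin n).isLt; lia, ?_⟩
  rw [Nat.cast_add, Fin.cast_val_eq_self, add_sub_cancel]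

theorem cycAdj_iff_eq_sub_one (i j : Fin n) : cycAdj n j i ↔ j = i - 1 := by
  rw [eq_sub_iff_add_eq, Fin.ext_iff, Fin.val_add, Fin.val_one', Nat.add_mod_mod, cycAdj]

theorem exists_and_add_of_forall_exists_lt {D : ℕ → Prop} {a b : Fin n} {m : ℕ}
    (hab : ∀ t, m ≤ t → t < m + 3 * n → D t → (t : Fin n) = a ∨ (t : Fin n) = b)
    (hex : ∀ t, m ≤ t → t < m + 2 * n → ∃ u, t < u ∧ u < t + n ∧ D u) :
    ∃ t, m ≤ t ∧ t < m + n ∧ D t ∧ D (t + n) := by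
  have hn := NeZero.pos n
  obtain ⟨t₀, hm₀, hn₀, h₀⟩ := hex m le_rfl (by lia)
  obtain ⟨t₁, hm₁, hn₁, h₁⟩ := hex t₀ (by lia) (by lia)
  obtain ⟨t₂, hm₂, hn₂, h₂⟩ := hex t₁ (by lia) (by lia)
  have hne₀₁ := natCast_ne_natCast_of_lt_add hm₁ hn₁
  have hne₁₂ := natCast_ne_natCast_of_lt_add hm₂ hn₂
  have heq₀₂ : (t₀ : Fin n) = t₂ := by
    have := hab t₀ (by lia) (by lia) h₀
    have := hab t₁ (by lia) (by lia) h₁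
    have := hab t₂ (by lia) (by lia) h₂
    grind
  have ht₂ : t₂ = t₀ + n := by
    obtain hlt | heq | hgt := lt_trichotomy t₂ (t₀ + n)
    · exact absurd heq₀₂ (natCast_ne_natCast_of_lt_add (by lia) hlt)
    · exact heq
    · refine absurd ?_ (natCast_ne_natCast_of_lt_add (n := n) hgt (by lia))
      rw [natCast_add_period, heq₀₂]
  exact ⟨t₀, hm₀.le, hn₀, h₀, ht₂ ▸ h₂⟩

section Schedule

variable {M : Type*} (F : Fin n → M → M → M) (s : Fin n → M)

/-- The joint strategies met from `s` when the nodes of the cycle move in cyclic order, at time `t`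
the node `t` modulo `n`, and the node `i` replaces its colour `z` by `F i y z` where `y` is the
colour of its predecessor. -/
def roundRobin : ℕ → Fin n → M
  | 0 => s
  | t + 1 => Function.update (roundRobin t) t (F t (roundRobin t (t - 1)) (roundRobin t t))

/-- The colour that the node moving at time `t` has just before its move. -/
def turnColour (t : ℕ) : M :=
  roundRobin F s t t

theorem roundRobin_eq_of_forall_ne {t u : ℕ} (htu : t ≤ u) {i : Fin n}
    (hi : ∀ k, t ≤ k → k < u → i ≠ k) : roundRobin F s u i = roundRobin F s t i := by
  induction u, htu using Nat.le_induction with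
  | base => rfl
  | succ u htu ih =>
    rw [roundRobin, Function.update_of_ne (hi u htu u.lt_succ_self)]
    exact ih fun k htk hku => hi k htk (by lia)

theorem roundRobin_natCast {t u : ℕ} (htu : t ≤ u) (hut : u < t + n) :
    roundRobin F s t u = turnColour F s u :=
  (roundRobin_eq_of_forall_ne F s htu fun _ _ hku =>
    (natCast_ne_natCast_of_lt_add hku (by lia)).symm).symm

theorem roundRobin_succ_natCast (t : ℕ) : roundRobin F s (t + 1) t = turnColour F s (t + n) := by
  have hn := NeZero.pos n
  rw [← roundRobin_natCast F s (t := t + 1) (u := t + n) (by lia) (by lia),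
    natCast_add_period]

theorem turnColour_add (t : ℕ) : turnColour F s (t + n + 1) =
    F (t + 1) (turnColour F s (t + n)) (turnColour F s (t + 1)) := by
  rw [show t + n + 1 = t + 1 + n by lia, ← roundRobin_succ_natCast, roundRobin,
    Function.update_self, Nat.cast_succ, add_sub_cancel_right, roundRobin_succ_natCast,
    ← Nat.cast_succ]
  rfl

end Schedule

theorem valid_roundRobin {M : Type} {C : Fin n → Finset M} {F : Fin n → M → M → M}
    {s : Fin n → M} (hF : ∀ i y z, F i y z ∈ C i) (hs : Valid C s) :
    ∀ t, Valid C (roundRobin F s t)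
  | 0 => hs
  | t + 1 => (Function.forall_update_iff _ fun i c => c ∈ C i).2
      ⟨hF _ _ _, fun i _ => valid_roundRobin hF hs t i⟩

section ReplySequence

variable {M : Type*} {G : Fin n → LocalGame M} {v : ℕ → M} {t : ℕ}

/-- `v t` is the colour of the node `t` modulo `n` just before its move at time `t`, when all nodes
move in cyclic order by `LocalGame.reply`. -/
def IsReplySequence (G : Fin n → LocalGame M) (v : ℕ → M) : Prop :=
  ∀ t, v (t + n + 1) = (G (t + 1)).reply (v (t + n)) (v (t + 1))

/-- The node moving at time `t + 1` is already playing a best response, its predecessor having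
colour `v (t + n)` since its last move. -/
def IsSettledAt (G : Fin n → LocalGame M) (v : ℕ → M) (t : ℕ) : Prop :=
  (G (t + 1)).IsBestResponse (v (t + n)) (v (t + 1))

namespace IsReplySequence

theorem isBestResponse (hv : IsReplySequence G v) (ht : n ≤ t) :
    (G (t + 1)).IsBestResponse (v t) (v (t + 1)) := by
  obtain ⟨r, rfl⟩ := Nat.exists_eq_add_of_le' ht
  rw [hv, natCast_add_period]
  exact LocalGame.isBestResponse_reply

theorem isTopBonus_of_weight_le_one (hv : IsReplySequence G v) (h : ¬ IsSettledAt G v t)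
    (hw : (G (t + 1)).weight ≤ 1) : (G (t + 1)).IsTopBonus (v (t + n + 1)) := by
  rw [hv]
  exact LocalGame.isTopBonus_reply_of_weight_le_one h hw

theorem isTopBonus_of_ne (hv : IsReplySequence G v) (h : ¬ IsSettledAt G v t)
    (hne : v (t + n + 1) ≠ v (t + n)) : (G (t + 1)).IsTopBonus (v (t + n + 1)) := by
  rw [hv] at hne ⊢
  exact LocalGame.isTopBonus_reply_of_ne h hne

theorem succ_eq_of_isTopBonus (hv : IsReplySequence G v) (h : ¬ IsSettledAt G v (t + n))
    (htop : (G (t + 1)).IsTopBonus (v (t + n + 1))) : v (t + n + n + 1) = v (t + n + n) := by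
  rw [IsSettledAt, natCast_add_period] at h
  rw [hv, natCast_add_period]
  exact htop.reply_eq h

theorem exists_succ_ne (hv : IsReplySequence G v) (ht : n ≤ t) (h : ¬ IsSettledAt G v t) :
    ∃ u, t < u ∧ u < t + n ∧ v (u + 1) ≠ v u := by
  by_contra! hcopy
  have hconst : v (t + n) = v (t + 1) := by
    refine Nat.le_induction (P := fun u _ => u ≤ t + n → v u = v (t + 1)) (fun _ => rfl)
      (fun u htu ih hu => ?_) (t + n) (by have := NeZero.pos n; lia) le_rfl
    exact (hcopy u htu hu).trans (ih (by lia))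
  apply h
  rw [IsSettledAt, hconst]
  exact (hv.isBestResponse ht).self

theorem exists_isSettledAt (hv : IsReplySequence G v) {a b : Fin n}
    (hab : ∀ i, 1 < (G (i + 1)).weight → i = a ∨ i = b) :
    ∃ t, n ≤ t ∧ t < 5 * n ∧ IsSettledAt G v t := by
  by_contra! hns
  have hheavy : ∀ t, 3 * n ≤ t → t < 3 * n + 3 * n → v (t + 1) ≠ v t →
      (t : Fin n) = a ∨ (t : Fin n) = b := by
    intro t ht ht' hne
    obtain ⟨r, rfl⟩ : ∃ r, t = r + n + n := ⟨t - n - n, by lia⟩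
    refine hab _ (lt_of_not_ge fun hlight => hne ?_)
    rw [natCast_add_period, natCast_add_period] at hlight
    exact hv.succ_eq_of_isTopBonus (hns _ (by lia) (by lia))
      (hv.isTopBonus_of_weight_le_one (hns r (by lia) (by lia)) hlight)
  have hdepart : ∀ t, 3 * n ≤ t → t < 3 * n + 2 * n → ∃ u, t < u ∧ u < t + n ∧ v (u + 1) ≠ v u :=
    fun t ht ht' => hv.exists_succ_ne (by lia) (hns t (by lia) (by lia))
  obtain ⟨t, ht, ht', hne, hne'⟩ := exists_and_add_of_forall_exists_lt hheavy hdepart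
  obtain ⟨r, rfl⟩ : ∃ r, t = r + n := ⟨t - n, by lia⟩
  exact hne' (hv.succ_eq_of_isTopBonus (hns _ (by lia) (by lia))
    (hv.isTopBonus_of_ne (hns r (by lia) (by lia)) hne))

end IsReplySequence

theorem isReplySequence_turnColour (G : Fin n → LocalGame M) (s : Fin n → M) :
    IsReplySequence G (turnColour (fun i => (G i).reply) s) :=
  turnColour_add (fun i => (G i).reply) s

theorem isBestResponse_roundRobin {s : Fin n → M} (ht : n ≤ t)
    (h : IsSettledAt G (turnColour (fun i => (G i).reply) s) t) (i : Fin n) :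
    (G i).IsBestResponse (roundRobin (fun i => (G i).reply) s (t + 1) (i - 1))
      (roundRobin (fun i => (G i).reply) s (t + 1) i) := by
  obtain ⟨u, htu, hut, rfl⟩ := exists_natCast_eq_of_lt_add (t + 1) i
  obtain ⟨r, rfl⟩ : ∃ r, u = r + 1 := ⟨u - 1, by lia⟩
  rw [roundRobin_natCast _ _ htu hut, Nat.cast_succ, add_sub_cancel_right]
  obtain rfl | htr := eq_or_lt_of_le (Nat.le_of_succ_le_succ htu)
  · rw [roundRobin_succ_natCast]
    exact h
  · rw [roundRobin_natCast _ _ htr (by lia)]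
    exact (isReplySequence_turnColour G s).isBestResponse (by lia)

end ReplySequence

theorem cycle_two_nontrivial_weights_improvement_path_general {n : ℕ} (hn : 2 ≤ n) {M : Type}
    (w : Fin n → Fin n → ℝ) (hw : ∀ i j, cycAdj n i j → 0 ≤ w i j) (a b : Fin n)
    (hab : ∀ i j, cycAdj n i j → 1 < w i j → i = a ∨ i = b) (β : Fin n → M → ℕ)
    (C : Fin n → Finset M) (s : Fin n → M) (hs : Valid C s) :
    ∃ L, L ≤ 5 * n ∧ ImpPath (cycAdj n) w β C s L := by
  have : NeZero n := ⟨by lia⟩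
  have : Nontrivial (Fin n) := Fin.nontrivial_iff_two_le.2 hn
  have hpred : ∀ i : Fin n, i - 1 ≠ i := fun i => sub_eq_self.not.2 one_ne_zero
  have hw' : ∀ i, 0 ≤ w (i - 1) i := fun i => hw _ _ ((cycAdj_iff_eq_sub_one _ _).2 rfl)
  let G := localGame hw' β fun i => ⟨s i, hs i⟩
  have hG : ∀ i, 1 < (G (i + 1)).weight → i = a ∨ i = b := fun i hi => by
    simpa only [add_sub_cancel_right] using
      hab (i + 1 - 1) (i + 1) ((cycAdj_iff_eq_sub_one _ _).2 rfl) hi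
  have hvalid : ∀ t, Valid C (roundRobin (fun i => (G i).reply) s t) :=
    valid_roundRobin (fun i _ _ => (LocalGame.isBestResponse_reply (G := G i)).1) hs
  obtain ⟨t, hnt, htn, hsettled⟩ := (isReplySequence_turnColour G s).exists_isSettledAt hG
  obtain ⟨L, hL, hpath⟩ := exists_impPath_le_of_eq_or_uniDev
    (fun t => update_reply_eq_or_uniDev cycAdj_iff_eq_sub_one (hpred t) (hvalid t))
    (isNash_of_forall_isBestResponse cycAdj_iff_eq_sub_one hpred
      (isBestResponse_roundRobin hnt hsettled))
  exact ⟨L, by lia, hpath⟩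

end RoundRobin

/-- There is a constant `c` such that every coordination game with arbitrary
bonuses on a simple cycle on `n` nodes in which at most two edges have weight
different from `1` (all other edges have weight `1`) admits, from every joint
strategy, a finite improvement path of length at most `c * n` ending in a
Nash equilibrium. -/
theorem cycle_two_nontrivial_weights_improvement_path :
    ∃ c : ℕ,
      ∀ (n : ℕ), 2 ≤ n →
      ∀ (M : Type) [Fintype M],
      ∀ (w : Fin n → Fin n → ℝ), (∀ i j, cycAdj n i j → 0 ≤ w i j) →
        (∃ a b : Fin n, ∀ i j, cycAdj n i j → w i j ≠ 1 → i = a ∨ i = b) →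
      ∀ (β : Fin n → M → ℕ),
      ∀ (C : Fin n → Finset M), (∀ i, (C i).Nonempty) →
      ∀ s : Fin n → M, Valid C s →
        ∃ L, L ≤ c * n ∧ ImpPath (cycAdj n) w β C s L := by
  refine ⟨5, fun n hn M _ w hw ⟨a, b, hab⟩ β C _ s hs => ?_⟩
  exact cycle_two_nontrivial_weights_improvement_path_general hn w hw a b
    (fun i j hij hlt => hab i j hij hlt.ne') β C s hs

end CG
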